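/- Let u : N → ℝ be a Lipschitz function with Lipschitz constant κ and H : T*N → ℝ continuous, convex in p. Then u is a viscosity subsolution of H(x, d_x u) = c if and only if ∂⁺u(x,v) ≤ L(x,v) + c for every (x,v) ∈ TN, where L is the Fenchel conjugate of H and ∂⁺u is the Clarke upper gauge. -/

import Mathlib

open Filter Topology

def reachableGrad {n : ℕ} (u : EuclideanSpace ℝ (Fin n) → ℝ)
    (x : EuclideanSpace ℝ (Fin n)) : Set (EuclideanSpace ℝ (Fin n) →L[ℝ] ℝ) :=
  {p | ∃ xs : ℕ → EuclideanSpace ℝ (Fin n),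
        (∀ m, DifferentiableAt ℝ u (xs m)) ∧
        Tendsto xs atTop (𝓝 x) ∧
        Tendsto (fun m => fderiv ℝ u (xs m)) atTop (𝓝 p)}

/-- The Clarke generalized gradient: the closed convex hull of the reachable gradients. -/
def clarkeGrad {n : ℕ} (u : EuclideanSpace ℝ (Fin n) → ℝ)
    (x : EuclideanSpace ℝ (Fin n)) : Set (EuclideanSpace ℝ (Fin n) →L[ℝ] ℝ) :=
  closure (convexHull ℝ (reachableGrad u x))

/-- The upper Clarke gauge `∂⁺u(x,v) = max{p(v) : p ∈ ∂ᶜu(x)}`. -/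
noncomputable def clarkeUpper {n : ℕ} (u : EuclideanSpace ℝ (Fin n) → ℝ)
    (x v : EuclideanSpace ℝ (Fin n)) : ℝ :=
  sSup ((fun p : EuclideanSpace ℝ (Fin n) →L[ℝ] ℝ => p v) '' clarkeGrad u x)

/-!
Both directions pass through the superdifferential `D⁺u(x)`, the set of differentials at `x` of
`C¹` functions touching `u` from above.

If `u` is a subsolution, then `H ≤ c` on the graph of `D⁺u`, hence on its closure. At a point of
differentiability `y`, maximizing `u` minus a steep paraboloid tangent to the graph of `u` produces
elements of `D⁺u` near `(y, du(y))`; the closure therefore contains every reachable gradient, and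
Fenchel's inequality passes from those to their closed convex hull.

Conversely, by Fenchel–Moreau it is enough to bound each `p ∈ D⁺u(x)` by the Clarke gauge. For
`a > ∂⁺u(x,v)`, compactness gives `du(z) v ≤ a` at all points of differentiability `z` near `x`.
Rademacher's theorem and Fubini turn this into a bound on difference quotients of `u` in direction
`v`, and these dominate `p v` because `u` is touched from above.
-/

open MeasureTheory Metric Set

section Fenchel

theorem surjective_inclusionInDoubleDual {E : Type*} [NormedAddCommGroup E]
    [InnerProductSpace ℝ E] [CompleteSpace E] :
    Function.Surjective (NormedSpace.inclusionInDoubleDual ℝ E) := by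
  intro l
  refine ⟨(InnerProductSpace.toDual ℝ E).symm
    (l.comp (InnerProductSpace.toDual ℝ E).toContinuousLinearEquiv.toContinuousLinearMap), ?_⟩
  ext q
  obtain ⟨w, rfl⟩ := (InnerProductSpace.toDual ℝ E).surjective q
  rw [NormedSpace.dual_def, InnerProductSpace.toDual_apply_apply, real_inner_comm,
    InnerProductSpace.toDual_symm_apply]
  rfl

variable {E : Type*} [NormedAddCommGroup E] [NormedSpace ℝ E]

theorem le_of_forall_apply_le_conjugate_add
    (hE : Function.Surjective (NormedSpace.inclusionInDoubleDual ℝ E))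
    {h : (E →L[ℝ] ℝ) → ℝ} (hconv : ConvexOn ℝ univ h) (hlsc : LowerSemicontinuous h)
    {L : E → ℝ} (hL : ∀ v, IsLUB {r : ℝ | ∃ p : E →L[ℝ] ℝ, r = p v - h p} (L v))
    {p : E →L[ℝ] ℝ} {c : ℝ} (hp : ∀ v, p v ≤ L v + c) : h p ≤ c := by
  refine le_of_forall_lt fun a ha => ?_
  obtain ⟨b, hab, hb⟩ := exists_between ha
  obtain ⟨l, d, hminorant, hpb⟩ := hconv.exists_affine_le_of_lt (𝕜 := ℝ) (mem_univ p) hb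
    isClosed_univ (hlsc.lowerSemicontinuousOn _)
  obtain ⟨v, rfl⟩ := hE l
  have hle : ∀ q : E →L[ℝ] ℝ, q v + d ≤ h q := fun q => hminorant ⟨q, mem_univ q⟩
  have heq : p v + d = b := hpb
  have hLv : L v ≤ -d := by
    refine (hL v).2 ?_
    rintro r ⟨q, rfl⟩
    linarith [hle q]
  linarith [hp v]

end Fenchel

section Superdifferential

variable {E : Type*} [NormedAddCommGroup E] [NormedSpace ℝ E]

/-- The viscosity superdifferential `D⁺u(x)`: the differentials at `x` of the `C¹` functions that
touch `u` from above at `x`. Touching is meant up to an additive constant, as a local maximum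
of the difference. -/
def superdifferential (u : E → ℝ) (x : E) : Set (E →L[ℝ] ℝ) :=
  {p | ∃ φ : E → ℝ, ContDiff ℝ 1 φ ∧ IsLocalMax (fun y => u y - φ y) x ∧ fderiv ℝ φ x = p}

theorem apply_le_of_mem_superdifferential {u : E → ℝ} {x v : E} {p : E →L[ℝ] ℝ}
    (hp : p ∈ superdifferential u x) {a : ℝ}
    (hua : ∀ᶠ t : ℝ in 𝓝[>] 0, u x - u (x - t • v) ≤ t * a) : p v ≤ a := by
  obtain ⟨φ, hφ, hmax, rfl⟩ := hp
  have hline : HasDerivAt (fun t : ℝ => x - t • v) (-v) 0 := by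
    simpa using ((hasDerivAt_id (0 : ℝ)).smul_const v).const_sub x
  have hderiv : HasDerivAt (fun t : ℝ => φ (x - t • v)) (-fderiv ℝ φ x v) 0 := by
    rw [← map_neg]
    refine HasFDerivAt.comp_hasDerivAt (0 : ℝ) ?_ hline
    simpa using (hφ.differentiable one_ne_zero x).hasFDerivAt
  have htendsto : Tendsto (fun t : ℝ => x - t • v) (𝓝[>] 0) (𝓝 x) := by
    simpa using hline.continuousAt.tendsto.mono_left nhdsWithin_le_nhds
  have hslope : -a ≤ -fderiv ℝ φ x v := by
    refine ge_of_tendsto hderiv.tendsto_slope_zero_right ?_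
    filter_upwards [self_mem_nhdsWithin, hua, htendsto.eventually hmax] with t ht hut hφt
    simp only [zero_add, zero_smul, sub_zero, smul_eq_mul]
    rw [inv_mul_eq_div, le_div_iff₀ ht]
    linarith
  exact neg_le_neg_iff.1 hslope

/-- The paraboloid of opening `A` that vanishes at its base point `y` and has differential `p`
there; subtracting it localizes maxima of a function with differential `p` at `y`. -/
def paraboloid (p : E →L[ℝ] ℝ) (A : ℝ) (y : E) : E → ℝ :=
  fun x => p (x - y) + A * ‖x - y‖ ^ 2

theorem mul_norm_sub_le_of_isMaxOn_sub_paraboloid {u : E → ℝ} {p : E →L[ℝ] ℝ} {A ε : ℝ} {y z : E}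
    {s : Set E} (hmax : IsMaxOn (fun x => u x - paraboloid p A y x) s z) (hy : y ∈ s)
    (hε : 0 ≤ ε) (huz : u z - u y - p (z - y) ≤ ε * ‖z - y‖) : A * ‖z - y‖ ≤ ε := by
  have huy : u y ≤ u z - (p (z - y) + A * ‖z - y‖ ^ 2) := by
    simpa [paraboloid] using hmax hy
  rcases (norm_nonneg (z - y)).eq_or_lt with hzero | hpos
  · rwa [← hzero, mul_zero]
  · refine le_of_mul_le_mul_right ?_ hpos
    calc A * ‖z - y‖ * ‖z - y‖ = A * ‖z - y‖ ^ 2 := by ring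
      _ ≤ u z - u y - p (z - y) := by linarith
      _ ≤ ε * ‖z - y‖ := huz

end Superdifferential

section Approximation

variable {E : Type*} [NormedAddCommGroup E] [InnerProductSpace ℝ E]

theorem contDiff_paraboloid (p : E →L[ℝ] ℝ) (A : ℝ) (y : E) : ContDiff ℝ 1 (paraboloid p A y) := by
  have hsq : ContDiff ℝ 1 fun x : E => ‖x - y‖ ^ 2 := (contDiff_id.sub contDiff_const).norm_sq ℝ
  unfold paraboloid
  fun_prop

theorem hasFDerivAt_paraboloid (p : E →L[ℝ] ℝ) (A : ℝ) (y z : E) :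
    HasFDerivAt (paraboloid p A y) (p + (2 * A) • innerSL ℝ (z - y)) z := by
  have hsub : HasFDerivAt (fun x : E => x - y) (ContinuousLinearMap.id ℝ E) z :=
    (hasFDerivAt_id z).sub_const y
  refine ((p.hasFDerivAt.comp z hsub).add (hsub.norm_sq.const_mul A)).congr_fderiv ?_
  rw [ContinuousLinearMap.comp_id, ContinuousLinearMap.comp_id, ← Nat.cast_smul_eq_nsmul ℝ,
    smul_smul, mul_comm, Nat.cast_ofNat]

theorem mk_fderiv_mem_closure_superdifferential [FiniteDimensional ℝ E] {u : E → ℝ}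
    (hu : Continuous u) {y : E} (hy : DifferentiableAt ℝ u y) :
    (y, fderiv ℝ u y) ∈ closure {w : E × (E →L[ℝ] ℝ) | w.2 ∈ superdifferential u w.1} := by
  refine Metric.mem_closure_iff.2 fun δ hδ => ?_
  set p := fderiv ℝ u y
  obtain ⟨ε, hε, hεδ⟩ : ∃ ε > 0, 2 * ε < δ := ⟨δ / 4, by positivity, by linarith⟩
  obtain ⟨r₀, hr₀, htaylor⟩ := Metric.eventually_nhds_iff.1 (hy.hasFDerivAt.isLittleO.def hε)
  obtain ⟨r, hr, hrlt⟩ := exists_between (lt_min hr₀ hδ)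
  -- This opening makes the bound `A * ‖z - y‖ ≤ ε` below put the maximum `z` inside the ball.
  set A := 2 * ε / r
  have hA : 0 < A := by positivity
  obtain ⟨z, hz, hmax⟩ := (isCompact_closedBall y r).exists_isMaxOn
    ⟨y, mem_closedBall_self hr.le⟩ (hu.sub (contDiff_paraboloid p A y).continuous).continuousOn
  have hAz : A * ‖z - y‖ ≤ ε :=
    mul_norm_sub_le_of_isMaxOn_sub_paraboloid hmax (mem_closedBall_self hr.le) hε.le <|
      (le_abs_self _).trans (htaylor (hz.trans_lt (hrlt.trans_le (min_le_left _ _))))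
  have hzr : z ∈ ball y r := by
    have hAr : A * r = 2 * ε := div_mul_cancel₀ _ hr.ne'
    exact mem_ball_iff_norm.2 (lt_of_mul_lt_mul_left (by linarith) hA.le)
  refine ⟨(z, p + (2 * A) • innerSL ℝ (z - y)), ⟨paraboloid p A y, contDiff_paraboloid p A y,
    hmax.isLocalMax (closedBall_mem_nhds_of_mem hzr), (hasFDerivAt_paraboloid p A y z).fderiv⟩, ?_⟩
  rw [Prod.dist_eq, max_lt_iff, dist_comm, dist_self_add_right, norm_smul, innerSL_apply_norm,
    Real.norm_of_nonneg (by positivity)]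
  exact ⟨hzr.trans (hrlt.trans_le (min_le_right _ _)), by linarith⟩

end Approximation

section MeanValue

theorem sub_le_mul_of_ae_deriv_le {g : ℝ → ℝ} {a b C : ℝ} (hab : a ≤ b)
    (hg : AbsolutelyContinuousOnInterval g a b) (hC : ∀ᵐ r, r ∈ Icc a b → deriv g r ≤ C) :
    g b - g a ≤ C * (b - a) :=
  calc g b - g a = ∫ r in a..b, deriv g r := hg.integral_deriv_eq_sub.symm
    _ ≤ ∫ _ in a..b, C := intervalIntegral.integral_mono_ae_restrict hab
        hg.intervalIntegrable_deriv intervalIntegrable_const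
        ((ae_restrict_iff' measurableSet_Icc).2 hC)
    _ = C * (b - a) := by rw [intervalIntegral.integral_const, smul_eq_mul, mul_comm]

theorem ae_ae_add_smul_mem {E : Type*} [AddCommGroup E] [Module ℝ E] [MeasurableSpace E]
    [MeasurableAdd₂ E] [MeasurableSMul ℝ E] {μ : Measure E} [SFinite μ] [μ.IsAddRightInvariant]
    {s : Set E} (hs : MeasurableSet s) (hμ : ∀ᵐ x ∂μ, x ∈ s) (w : E) :
    ∀ᵐ x ∂μ, ∀ᵐ r : ℝ, x + r • w ∈ s := by
  have hmeas : Measurable fun z : E × ℝ => z.1 + z.2 • w := by fun_prop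
  rw [Measure.ae_ae_comm (p := fun x r => x + r • w ∈ s) (hmeas hs)]
  exact Eventually.of_forall fun r =>
    (measurePreserving_add_right μ (r • w)).quasiMeasurePreserving.ae hμ

variable {E : Type*} [NormedAddCommGroup E] [NormedSpace ℝ E] {u : E → ℝ} {s : Set E}
  {K : NNReal} {x w : E} {a : ℝ}

theorem sub_le_of_ae_fderiv_apply_le_of_convex (hu : LipschitzOnWith K u s) (hs : Convex ℝ s)
    (hx : x ∈ s) (hxw : x + w ∈ s) (hd : ∀ᵐ r : ℝ, r ∈ Icc (0 : ℝ) 1 →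
      DifferentiableAt ℝ u (x + r • w) ∧ fderiv ℝ u (x + r • w) w ≤ a) :
    u (x + w) - u x ≤ a := by
  let γ : ℝ → E := fun r => x + r • w
  have hγ : LipschitzWith ‖w‖₊ γ := LipschitzWith.of_dist_le_mul fun r r' => by
    rw [dist_add_left, dist_eq_norm, ← sub_smul, norm_smul, mul_comm, dist_eq_norm, coe_nnnorm]
  have hγs : MapsTo γ (uIcc 0 1) s := fun r hr =>
    hs.add_smul_mem hx hxw (by rwa [uIcc_of_le zero_le_one] at hr)
  have hac : AbsolutelyContinuousOnInterval (u ∘ γ) 0 1 :=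
    (hu.comp hγ.lipschitzOnWith hγs).absolutelyContinuousOnInterval
  have hderiv : ∀ᵐ r : ℝ, r ∈ Icc (0 : ℝ) 1 → deriv (u ∘ γ) r ≤ a := by
    filter_upwards [hd] with r hr hr01
    have hγ' : HasDerivAt γ w r := by
      simpa only [one_smul] using ((hasDerivAt_id' r).smul_const w).const_add x
    rw [((hr hr01).1.hasFDerivAt.comp_hasDerivAt r hγ').deriv]
    exact (hr hr01).2
  simpa [γ] using sub_le_mul_of_ae_deriv_le zero_le_one hac hderiv

/-- By Rademacher and Fubini, almost every segment parallel to `w` meets the set of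
non-differentiability in a null set; the segment from `x` is a limit of such segments. -/
theorem sub_le_of_forall_fderiv_apply_le [FiniteDimensional ℝ E] (hu : LipschitzOnWith K u s)
    (hs : Convex ℝ s) (hso : IsOpen s)
    (ha : ∀ z ∈ s, DifferentiableAt ℝ u z → fderiv ℝ u z w ≤ a)
    (hx : x ∈ s) (hxw : x + w ∈ s) : u (x + w) - u x ≤ a := by
  borelize E
  let μ : Measure E := Measure.addHaar
  have hdiff : ∀ᵐ z ∂μ, z ∈ sᶜ ∪ {z | DifferentiableAt ℝ u z} := by
    filter_upwards [hu.ae_differentiableWithinAt_of_mem (μ := μ)] with z hz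
    exact (em' (z ∈ s)).imp_right fun hzs => (hz hzs).differentiableAt (hso.mem_nhds hzs)
  have hlines := Measure.dense_of_ae (ae_ae_add_smul_mem (hso.measurableSet.compl.union
    (measurableSet_of_differentiableAt ℝ u)) hdiff w)
  have hshift : ContinuousAt (fun y : E => y + w) x := by fun_prop
  have hnear : ∀ᶠ y in 𝓝 x, y ∈ s ∧ y + w ∈ s :=
    (hso.eventually_mem hx).and (hshift.eventually_mem (hso.mem_nhds hxw))
  have hfreq : ∃ᶠ y in 𝓝 x, u (y + w) - u y ≤ a := by
    refine ((mem_closure_iff_frequently.1 (hlines x)).and_eventually hnear).mono ?_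
    rintro y ⟨hline, hy, hyw⟩
    refine sub_le_of_ae_fderiv_apply_le_of_convex hu hs hy hyw ?_
    filter_upwards [hline] with r hr hr01
    have hrs : y + r • w ∈ s := hs.add_smul_mem hy hyw hr01
    have hrd := hr.resolve_left (not_not_intro hrs)
    exact ⟨hrd, ha _ hrs hrd⟩
  have hcont : ∀ {z}, z ∈ s → ContinuousAt u z := fun hz =>
    hu.continuousOn.continuousAt (hso.mem_nhds hz)
  exact le_of_tendsto_of_frequently
    ((ContinuousAt.comp (f := (· + w)) (hcont hxw) hshift).sub (hcont hx)) hfreq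

theorem eventually_sub_le_mul_of_eventually_fderiv_apply_le [FiniteDimensional ℝ E]
    (hs : s ∈ 𝓝 x) (hu : LipschitzOnWith K u s)
    (ha : ∀ᶠ z in 𝓝 x, DifferentiableAt ℝ u z → fderiv ℝ u z w ≤ a) :
    ∀ᶠ t : ℝ in 𝓝[>] 0, u x - u (x - t • w) ≤ t * a := by
  obtain ⟨δ, hδ, hball⟩ := Metric.eventually_nhds_iff_ball.1 (ha.and hs)
  have htendsto : Tendsto (fun t : ℝ => x - t • w) (𝓝[>] 0) (𝓝 x) := by
    have hline : Continuous fun t : ℝ => x - t • w := by fun_prop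
    simpa using (hline.tendsto 0).mono_left nhdsWithin_le_nhds
  filter_upwards [self_mem_nhdsWithin, htendsto (ball_mem_nhds x hδ)] with t ht hxt
  have hsub := sub_le_of_forall_fderiv_apply_le (w := t • w) (a := t * a)
    (hu.mono fun z hz => (hball z hz).2) (convex_ball x δ) isOpen_ball
    (fun z hz hzd => by
      rw [map_smul, smul_eq_mul]
      exact mul_le_mul_of_nonneg_left ((hball z hz).1 hzd) (le_of_lt ht))
    hxt (by rw [sub_add_cancel]; exact mem_ball_self hδ)
  rwa [sub_add_cancel] at hsub

end MeanValue

section Clarke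

variable {n : ℕ} {u : EuclideanSpace ℝ (Fin n) → ℝ} {x v : EuclideanSpace ℝ (Fin n)}
  {p : EuclideanSpace ℝ (Fin n) →L[ℝ] ℝ}

theorem reachableGrad_subset_clarkeGrad : reachableGrad u x ⊆ clarkeGrad u x :=
  (subset_convexHull ℝ _).trans subset_closure

theorem clarkeGrad_subset {s : Set (EuclideanSpace ℝ (Fin n) →L[ℝ] ℝ)} (hs : Convex ℝ s)
    (hsc : IsClosed s) (h : reachableGrad u x ⊆ s) : clarkeGrad u x ⊆ s :=
  closure_minimal (convexHull_min h hs) hsc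

theorem mk_mem_closure_superdifferential_of_mem_reachableGrad (hu : Continuous u)
    (hp : p ∈ reachableGrad u x) :
    (x, p) ∈ closure {w : EuclideanSpace ℝ (Fin n) × (EuclideanSpace ℝ (Fin n) →L[ℝ] ℝ) |
      w.2 ∈ superdifferential u w.1} := by
  obtain ⟨xs, hd, hxs, hlim⟩ := hp
  exact isClosed_closure.mem_of_tendsto (hxs.prodMk_nhds hlim)
    (Eventually.of_forall fun m => mk_fderiv_mem_closure_superdifferential hu (hd m))

variable {K : NNReal} {s : Set (EuclideanSpace ℝ (Fin n))}

theorem exists_mem_reachableGrad_subseq (hs : s ∈ 𝓝 x) (hu : LipschitzOnWith K u s)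
    {xs : ℕ → EuclideanSpace ℝ (Fin n)} (hd : ∀ m, DifferentiableAt ℝ u (xs m))
    (hxs : Tendsto xs atTop (𝓝 x)) :
    ∃ p ∈ reachableGrad u x, ∃ ψ : ℕ → ℕ, StrictMono ψ ∧
      Tendsto (fun m => fderiv ℝ u (xs (ψ m))) atTop (𝓝 p) := by
  have hbound : ∀ᶠ m in atTop, fderiv ℝ u (xs m) ∈ closedBall 0 (K : ℝ) := by
    filter_upwards [hxs.eventually (eventually_mem_nhds_iff.2 hs)] with m hm
    simpa using norm_fderiv_le_of_lipschitzOn ℝ hm hu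
  obtain ⟨p, -, ψ, hψ, hp⟩ := (isCompact_closedBall _ _).tendsto_subseq' hbound.frequently
  exact ⟨p, ⟨xs ∘ ψ, fun m => hd _, hxs.comp hψ.tendsto_atTop, hp⟩, ψ, hψ, hp⟩

theorem reachableGrad_nonempty (hs : s ∈ 𝓝 x) (hu : LipschitzOnWith K u s) :
    (reachableGrad u x).Nonempty := by
  obtain ⟨g, hg, hug⟩ := hu.extend_real
  have hdense : ∃ᶠ z in 𝓝 x, DifferentiableAt ℝ g z :=
    mem_closure_iff_frequently.1 (Measure.dense_of_ae (μ := volume) hg.ae_differentiableAt x)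
  have hfreq : ∃ᶠ z in 𝓝 x, DifferentiableAt ℝ u z :=
    (hdense.and_eventually (eventually_mem_nhds_iff.2 hs)).mono fun z hz =>
      hz.1.congr_of_eventuallyEq (hug.eventuallyEq_of_mem hz.2)
  obtain ⟨xs, hxs, hd⟩ := exists_seq_forall_of_frequently hfreq
  obtain ⟨p, hp, -⟩ := exists_mem_reachableGrad_subseq hs hu hd hxs
  exact ⟨p, hp⟩

theorem clarkeGrad_subset_closedBall (hs : s ∈ 𝓝 x) (hu : LipschitzOnWith K u s) :
    clarkeGrad u x ⊆ closedBall 0 K := by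
  refine clarkeGrad_subset (convex_closedBall _ _) isClosed_closedBall ?_
  rintro p ⟨xs, -, hxs, hp⟩
  refine isClosed_closedBall.mem_of_tendsto hp ?_
  filter_upwards [hxs.eventually (eventually_mem_nhds_iff.2 hs)] with m hm
  simpa using norm_fderiv_le_of_lipschitzOn ℝ hm hu

theorem isLUB_clarkeUpper (hs : s ∈ 𝓝 x) (hu : LipschitzOnWith K u s)
    (v : EuclideanSpace ℝ (Fin n)) :
    IsLUB ((fun p => p v) '' clarkeGrad u x) (clarkeUpper u x v) := by
  refine isLUB_csSup
    (((reachableGrad_nonempty hs hu).mono reachableGrad_subset_clarkeGrad).image _) ⟨K * ‖v‖, ?_⟩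
  rintro _ ⟨q, hq, rfl⟩
  have hqK : ‖q‖ ≤ K := by simpa using clarkeGrad_subset_closedBall hs hu hq
  exact (le_abs_self _).trans (q.le_of_opNorm_le hqK v)

theorem clarkeUpper_le_iff (hs : s ∈ 𝓝 x) (hu : LipschitzOnWith K u s) {a : ℝ} :
    clarkeUpper u x v ≤ a ↔ ∀ p ∈ reachableGrad u x, p v ≤ a := by
  rw [isLUB_le_iff (isLUB_clarkeUpper hs hu v), mem_upperBounds, forall_mem_image]
  refine ⟨fun h p hp => h (reachableGrad_subset_clarkeGrad hp), fun h => ?_⟩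
  exact clarkeGrad_subset (convex_halfSpace_le (ContinuousLinearMap.apply ℝ ℝ v).isLinear a)
    (isClosed_le (ContinuousLinearMap.apply ℝ ℝ v).continuous continuous_const) h

theorem eventually_fderiv_apply_le_of_clarkeUpper_lt (hs : s ∈ 𝓝 x) (hu : LipschitzOnWith K u s)
    {a : ℝ} (ha : clarkeUpper u x v < a) :
    ∀ᶠ z in 𝓝 x, DifferentiableAt ℝ u z → fderiv ℝ u z v ≤ a := by
  by_contra hcon
  have hfreq : ∃ᶠ z in 𝓝 x, DifferentiableAt ℝ u z ∧ a < fderiv ℝ u z v :=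
    (not_eventually.1 hcon).mono fun z hz => by simpa using hz
  obtain ⟨xs, hxs, hmem⟩ := exists_seq_forall_of_frequently hfreq
  obtain ⟨p, hp, ψ, -, hlim⟩ := exists_mem_reachableGrad_subseq hs hu (fun m => (hmem m).1) hxs
  have hpv : a ≤ p v :=
    ge_of_tendsto (((ContinuousLinearMap.apply ℝ ℝ v).continuous.tendsto p).comp hlim)
      (Eventually.of_forall fun m => (hmem (ψ m)).2.le)
  exact (hpv.trans ((clarkeUpper_le_iff hs hu).1 le_rfl p hp)).not_gt ha

theorem apply_le_clarkeUpper_of_mem_superdifferential (hs : s ∈ 𝓝 x) (hu : LipschitzOnWith K u s)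
    (hp : p ∈ superdifferential u x) (v : EuclideanSpace ℝ (Fin n)) : p v ≤ clarkeUpper u x v :=
  le_of_forall_gt_imp_ge_of_dense fun _ ha =>
    apply_le_of_mem_superdifferential hp <|
      eventually_sub_le_mul_of_eventually_fderiv_apply_le hs hu <|
        eventually_fderiv_apply_le_of_clarkeUpper_lt hs hu ha

end Clarke

theorem viscSubsol_iff_clarkeUpper_le_general {n : ℕ}
    (H : EuclideanSpace ℝ (Fin n) → (EuclideanSpace ℝ (Fin n) →L[ℝ] ℝ) → ℝ)
    (hlsc : LowerSemicontinuous (Function.uncurry H))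
    (hconv : ∀ x, ConvexOn ℝ Set.univ (H x))
    (L : EuclideanSpace ℝ (Fin n) → EuclideanSpace ℝ (Fin n) → ℝ)
    (hL : ∀ x v, IsLUB {r : ℝ | ∃ p : EuclideanSpace ℝ (Fin n) →L[ℝ] ℝ,
      r = p v - H x p} (L x v))
    (c : ℝ) (u : EuclideanSpace ℝ (Fin n) → ℝ) (hu : LocallyLipschitz u) :
    (∀ x (φ : EuclideanSpace ℝ (Fin n) → ℝ), ContDiff ℝ 1 φ →
        IsLocalMax (fun y => u y - φ y) x → H x (fderiv ℝ φ x) ≤ c) ↔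
    (∀ x v, clarkeUpper u x v ≤ L x v + c) := by
  constructor
  · intro hvisc x v
    obtain ⟨K, s, hs, hus⟩ := hu x
    refine (clarkeUpper_le_iff hs hus).2 fun p hp => ?_
    have hHp : H x p ≤ c := by
      refine closure_minimal ?_ (hlsc.isClosed_preimage c)
        (mk_mem_closure_superdifferential_of_mem_reachableGrad hu.continuous hp)
      rintro ⟨y, q⟩ ⟨φ, hφ, hmax, hφq⟩
      obtain rfl : fderiv ℝ φ y = q := hφq
      exact hvisc y φ hφ hmax
    have hfenchel : p v - H x p ≤ L x v := (hL x v).1 ⟨p, rfl⟩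
    linarith
  · intro hle x φ hφ hmax
    obtain ⟨K, s, hs, hus⟩ := hu x
    exact le_of_forall_apply_le_conjugate_add surjective_inclusionInDoubleDual (hconv x)
      (hlsc.comp (by fun_prop : Continuous fun p => (x, p))) (hL x) fun v =>
        (apply_le_clarkeUpper_of_mem_superdifferential hs hus ⟨φ, hφ, hmax, rfl⟩ v).trans (hle x v)

/-- A Lipschitz function `u` is a viscosity subsolution of `H(x, d_x u) = c`, for `H`
continuous and convex in the momentum, if and only if `∂⁺u(x,v) ≤ L(x,v) + c` for every
`(x,v)`, where `L` is the fiberwise Fenchel conjugate of `H`. -/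
theorem viscSubsol_iff_clarkeUpper_le {n : ℕ}
    (H : EuclideanSpace ℝ (Fin n) → (EuclideanSpace ℝ (Fin n) →L[ℝ] ℝ) → ℝ)
    (hcont : Continuous (Function.uncurry H))
    (hconv : ∀ x, ConvexOn ℝ Set.univ (H x))
    (L : EuclideanSpace ℝ (Fin n) → EuclideanSpace ℝ (Fin n) → ℝ)
    (hL : ∀ x v, IsLUB {r : ℝ | ∃ p : EuclideanSpace ℝ (Fin n) →L[ℝ] ℝ,
      r = p v - H x p} (L x v))
    (c : ℝ) (u : EuclideanSpace ℝ (Fin n) → ℝ)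
    (K : NNReal) (hu : LipschitzWith K u) :
    (∀ x (φ : EuclideanSpace ℝ (Fin n) → ℝ), ContDiff ℝ 1 φ →
        IsLocalMax (fun y => u y - φ y) x → H x (fderiv ℝ φ x) ≤ c) ↔
    (∀ x v, clarkeUpper u x v ≤ L x v + c) :=
  viscSubsol_iff_clarkeUpper_le_general H hcont.lowerSemicontinuous hconv L hL c u
    hu.locallyLipschitz
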